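/- arXiv:0710.5184 — 2 statements merged into one kernel-verified Lean document; each statement's English description precedes it below -/
import Mathlib

section
/- Darboux intertwining, first identity (equation (Id1)). For every 0 ≤ i ≤ m and every φ at which W(φ) ≠ 0 and W̃(φ) ≠ 0, one has −Ψ̃_{m+1}(φ) · (d/dφ)(Ψ̃_i/Ψ̃_{m+1})(φ) = −Ψ_i(φ); that is, the operator A_m^* := −Ψ̃_{m+1} ∘ (d/dφ) ∘ Ψ̃_{m+1}^{−1} sends Ψ̃_i to −Ψ_i. -/
/-- The Wronskian of a family of `n` real functions: the determinant of the
`n × n` matrix whose `(i, j)`-entry is the `j`-th derivative of the `i`-th function. -/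
noncomputable def wronsk {n : ℕ} (f : Fin n → ℝ → ℝ) (t : ℝ) : ℝ :=
  (Matrix.of fun i j : Fin n => iteratedDeriv (j : ℕ) (f i) t).det

/-- The functions `χ_i(φ) = cos(k_i φ + θ_i)`, `0 ≤ i ≤ m+1`. -/
noncomputable def chiF (m : ℕ) (k : Fin (m + 2) → ℤ) (θ : Fin (m + 2) → ℝ)
    (i : Fin (m + 2)) : ℝ → ℝ :=
  fun φ => Real.cos ((k i : ℝ) * φ + θ i)

/-- `W(φ) = Wr[χ_0, …, χ_m](φ)` (the first `m+1` functions). -/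
noncomputable def Wfn (m : ℕ) (k : Fin (m + 2) → ℤ) (θ : Fin (m + 2) → ℝ) : ℝ → ℝ :=
  wronsk fun j : Fin (m + 1) => chiF m k θ j.castSucc

/-- `W̃(φ) = Wr[χ_0, …, χ_{m+1}](φ)` (all `m+2` functions). -/
noncomputable def Wtfn (m : ℕ) (k : Fin (m + 2) → ℤ) (θ : Fin (m + 2) → ℝ) : ℝ → ℝ :=
  wronsk (chiF m k θ)

/-- `Ψ_i(φ) = Wr[χ_0, …, χ_{i−1}, χ_{i+1}, …, χ_m](φ)/W(φ)` for `0 ≤ i ≤ m`. -/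
noncomputable def PsiF (m : ℕ) (k : Fin (m + 2) → ℤ) (θ : Fin (m + 2) → ℝ)
    (i : Fin (m + 1)) : ℝ → ℝ :=
  fun φ => wronsk (fun j : Fin m => chiF m k θ (i.succAbove j).castSucc) φ / Wfn m k θ φ

/-- `Ψ̃_i(φ) = Wr[χ_0, …, χ_{i−1}, χ_{i+1}, …, χ_{m+1}](φ)/W̃(φ)` for `0 ≤ i ≤ m+1`. -/
noncomputable def PsitF (m : ℕ) (k : Fin (m + 2) → ℤ) (θ : Fin (m + 2) → ℝ)
    (i : Fin (m + 2)) : ℝ → ℝ :=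
  fun φ => wronsk (fun j : Fin (m + 1) => chiF m k θ (i.succAbove j)) φ / Wtfn m k θ φ

open Matrix in
/-- Derivative of a determinant, column by column. -/
theorem hasDerivAt_det_cols {n : ℕ} (M : Fin n → Fin n → ℝ → ℝ) (M' : Fin n → Fin n → ℝ) (t : ℝ)
    (h : ∀ i j, HasDerivAt (M i j) (M' i j) t) :
    HasDerivAt (fun s => (Matrix.of fun i j => M i j s).det)
      (∑ j, ((Matrix.of fun i j => M i j t).updateCol j (fun i => M' i j)).det) t := by
  have key : HasDerivAt (fun s => ∑ σ : Equiv.Perm (Fin n),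
      ((Equiv.Perm.sign σ : ℤ) : ℝ) * ∏ i, M (σ i) i s)
      (∑ σ : Equiv.Perm (Fin n), ((Equiv.Perm.sign σ : ℤ) : ℝ) *
        ∑ j, (∏ i ∈ Finset.univ.erase j, M (σ i) i t) • M' (σ j) j) t := by
    apply HasDerivAt.fun_sum
    intro σ _
    apply HasDerivAt.const_mul
    apply HasDerivAt.fun_finsetProd
    intro i _
    exact h _ _
  simp only [Matrix.det_apply', Matrix.of_apply]
  convert key using 1
  rw [Finset.sum_comm]
  refine Finset.sum_congr rfl fun σ _ => ?_
  rw [Finset.mul_sum]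
  refine Finset.sum_congr rfl fun j _ => ?_
  congr 1
  rw [← Finset.mul_prod_erase Finset.univ _ (Finset.mem_univ j), smul_eq_mul, mul_comm]
  congr 1
  · refine Finset.prod_congr rfl fun i hi => ?_
    rw [Matrix.updateCol_ne (Finset.ne_of_mem_erase hi)]
    rfl
  · simp

/-- Derivative of a Wronskian: only the last column is differentiated. -/
theorem hasDerivAt_wronsk {n : ℕ} (f : Fin (n + 1) → ℝ → ℝ) (hf : ∀ i, ContDiff ℝ ⊤ (f i)) (t : ℝ) :
    HasDerivAt (wronsk f)
      (Matrix.of fun i j : Fin (n + 1) =>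
        iteratedDeriv (((Fin.last n).castSucc.succAbove j : Fin (n + 2)) : ℕ) (f i) t).det t := by
  have hd : ∀ (i j : Fin (n + 1)), HasDerivAt (iteratedDeriv (j : ℕ) (f i))
      (iteratedDeriv ((j : ℕ) + 1) (f i) t) t := by
    intro i j
    rw [iteratedDeriv_succ]
    refine (((hf i).differentiable_iteratedDeriv (j : ℕ) ?_) t).hasDerivAt
    exact WithTop.coe_lt_top _
  have h := hasDerivAt_det_cols (fun i j => iteratedDeriv (j : ℕ) (f i)) _ t hd
  have h2 : wronsk f = fun s =>
      (Matrix.of fun i j : Fin (n + 1) => iteratedDeriv (j : ℕ) (f i) s).det := rfl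
  rw [h2]
  convert h using 1
  rw [Finset.sum_eq_single (Fin.last n)]
  · congr 1
    ext i j
    refine Fin.lastCases ?_ (fun j => ?_) j
    · simp
    · rw [Matrix.updateCol_ne (Fin.castSucc_lt_last j).ne]
      simp only [Matrix.of_apply]
      rw [Fin.succAbove_of_castSucc_lt _ _ (by simp [Fin.lt_def])]
      simp
  · intro j _ hj
    refine Fin.lastCases (fun hj => absurd rfl hj) (fun j _ => ?_) j hj
    refine Matrix.det_zero_of_column_eq (i := j.castSucc) (j := j.succ) ?_ ?_
    · exact (Fin.castSucc_lt_succ).ne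
    · intro i
      rw [Matrix.updateCol_self, Matrix.updateCol_ne (Fin.castSucc_lt_succ).ne']
      simp
  · simp

open Matrix in
/-- A Desnanot–Jacobi identity. -/
theorem desnanot_aux {m : ℕ} (A : Matrix (Fin (m + 2)) (Fin (m + 2)) ℝ) (i : Fin (m + 1))
    (hW : (A.submatrix Fin.castSucc Fin.castSucc).det ≠ 0) :
    (A.submatrix Fin.castSucc Fin.castSucc).det *
        (A.submatrix i.castSucc.succAbove (Fin.last m).castSucc.succAbove).det
      - (A.submatrix i.castSucc.succAbove Fin.castSucc).det *
        (A.submatrix Fin.castSucc (Fin.last m).castSucc.succAbove).det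
    = A.det * (A.submatrix (fun j : Fin m => (i.succAbove j).castSucc)
        (fun j : Fin m => j.castSucc.castSucc)).det := by
  set W := (A.submatrix Fin.castSucc Fin.castSucc).det with hWdef
  set l : Fin (m + 2) := Fin.last (m + 1) with hl
  set c : Fin (m + 2) := (Fin.last m).castSucc with hc
  have hcl : c ≠ l := (Fin.castSucc_lt_last _).ne
  have hla : l.succAbove = Fin.castSucc := Fin.succAbove_last
  set B : Matrix (Fin (m + 2)) (Fin (m + 2)) ℝ := A.updateCol l (Pi.single l 1) with hB
  have hll : A.adjugate l l = W := by
    rw [adjugate_fin_succ_eq_det_submatrix, hla]; simp [hl, hWdef, ← two_mul]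
  have hBdet : B.det = W := by
    rw [det_succ_column _ l, Finset.sum_eq_single l]
    · have hsub : B.submatrix l.succAbove l.succAbove = A.submatrix Fin.castSucc Fin.castSucc := by
        ext a b
        simp only [submatrix_apply, hla, hB]
        rw [updateCol_ne (Fin.castSucc_lt_last _).ne]
      rw [hsub, hB, updateCol_self]
      simp [← two_mul, hWdef]
    · intro r _ hr
      rw [hB, updateCol_self, Pi.single_eq_of_ne hr]
      simp
    · simp
  have hBx : B *ᵥ (fun j => if j = l then A.adjugate l i.castSucc * A.det
      else W * A.adjugate j i.castSucc - A.adjugate l i.castSucc * A.adjugate j l)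
      = fun r => W * A.det * (1 : Matrix _ _ ℝ) r i.castSucc := by
    have h1 : ∀ r s, ∑ j, A r j * A.adjugate j s = A.det * (1 : Matrix _ _ ℝ) r s := by
      intro r s
      have := congrFun (congrFun (mul_adjugate A) r) s
      simpa [mul_apply] using this
    ext r
    have e1 := h1 r i.castSucc
    have e2 := h1 r l
    rw [← Finset.add_sum_erase _ _ (Finset.mem_univ l)] at e1 e2
    simp only [mulVec, dotProduct]
    rw [← Finset.add_sum_erase _ _ (Finset.mem_univ l)]
    have e3 : ∀ j ∈ Finset.univ.erase l, B r j * (if j = l then A.adjugate l i.castSucc * A.det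
      else W * A.adjugate j i.castSucc - A.adjugate l i.castSucc * A.adjugate j l)
      = W * (A r j * A.adjugate j i.castSucc) - A.adjugate l i.castSucc * (A r j * A.adjugate j l) := by
      intro j hj
      rw [if_neg (Finset.ne_of_mem_erase hj), hB, updateCol_ne (Finset.ne_of_mem_erase hj)]
      ring
    rw [Finset.sum_congr rfl e3, Finset.sum_sub_distrib, ← Finset.mul_sum, ← Finset.mul_sum]
    rw [hll] at e2
    have e4 : B r l = (1 : Matrix _ _ ℝ) r l := by
      rw [hB, updateCol_self, one_apply, Pi.single_apply]
    rw [e4, if_pos rfl]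
    linear_combination W * e1 - A.adjugate l i.castSucc * e2
  have h5 := congrFun (congrArg (fun v => B.adjugate *ᵥ v) hBx) c
  simp only [mulVec_mulVec, adjugate_mul, hBdet] at h5
  have h6 : W * A.adjugate c i.castSucc - A.adjugate l i.castSucc * A.adjugate c l
      = A.det * B.adjugate c i.castSucc := by
    simp only [smul_mulVec, one_mulVec, Pi.smul_apply, if_neg hcl, smul_eq_mul] at h5
    apply mul_left_cancel₀ hW
    rw [h5]
    simp only [mulVec, dotProduct]
    rw [Finset.sum_eq_single i.castSucc]
    · simp; ring
    · intro j _ hj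
      simp [one_apply_ne hj]
    · simp
  have h7 : (B.submatrix i.castSucc.succAbove c.succAbove).det =
      (A.submatrix (fun j : Fin m => (i.succAbove j).castSucc)
        (fun j : Fin m => j.castSucc.castSucc)).det := by
    have hcs : c.succAbove (Fin.last m) = l := by simp [hc, hl]
    have hcs2 : ∀ j : Fin m, c.succAbove j.castSucc = j.castSucc.castSucc := fun j =>
      Fin.succAbove_of_castSucc_lt _ _ (by simp [hc, Fin.lt_def])
    have his : i.castSucc.succAbove (Fin.last m) = l := by
      rw [Fin.succAbove_of_le_castSucc]
      · simp [hl]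
      · simp [Fin.le_def]; omega
    rw [det_succ_column _ (Fin.last m), Finset.sum_eq_single (Fin.last m)]
    · rw [submatrix_apply, hcs, his, hB, updateCol_self, submatrix_submatrix]
      simp only [Fin.succAbove_last, Fin.val_last, Pi.single_eq_same, ← two_mul]
      simp only [pow_mul, even_two, Even.neg_pow, one_pow, one_mul]
      congr 1
      ext a b
      simp only [submatrix_apply, Function.comp, hcs2]
      rw [updateCol_ne (Fin.castSucc_lt_last _).ne, Fin.castSucc_succAbove_castSucc]
    · intro r _ hr
      rw [submatrix_apply, hcs, hB, updateCol_self, Pi.single_eq_of_ne]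
      · simp
      · rw [← his]; exact fun h => hr (Fin.succAbove_right_injective h)
    · simp
  simp only [adjugate_fin_succ_eq_det_submatrix, hla, h7] at h6
  have hs : ((-1 : ℝ) ^ ((i : ℕ) + m)) * (-1) ^ ((i : ℕ) + m) = 1 := by
    rw [← mul_pow]; simp
  have hs2 : ((-1 : ℝ) ^ (m + m)) = 1 := by simp [← two_mul]
  simp only [hl, hc, Fin.val_last, Fin.val_castSucc] at h6
  rw [show m + 1 + m = m + m + 1 by ring, show (i : ℕ) + (m + 1) = i + m + 1 by ring,
    pow_succ, pow_succ, hs2] at h6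
  linear_combination (-1 : ℝ) ^ ((i : ℕ) + m) * h6 + (A.det * (A.submatrix (fun j : Fin m => (i.succAbove j).castSucc)
        (fun j : Fin m => j.castSucc.castSucc)).det - W *
        (A.submatrix i.castSucc.succAbove (Fin.last m).castSucc.succAbove).det
      + (A.submatrix i.castSucc.succAbove Fin.castSucc).det *
        (A.submatrix Fin.castSucc (Fin.last m).castSucc.succAbove).det) * hs

theorem contDiff_chiF (m : ℕ) (k : Fin (m + 2) → ℤ) (θ : Fin (m + 2) → ℝ) (i : Fin (m + 2)) :
    ContDiff ℝ ⊤ (chiF m k θ i) := by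
  unfold chiF
  fun_prop

/-- **Equation (Id1): Darboux intertwining, first identity.** The operator
`A_m^* = −Ψ̃_{m+1} ∘ (d/dφ) ∘ Ψ̃_{m+1}^{−1}` sends `Ψ̃_i` to `−Ψ_i` for `0 ≤ i ≤ m`. -/
theorem darboux_intertwining_first (m : ℕ) (hm : 1 ≤ m)
    (k : Fin (m + 2) → ℤ) (hk0 : k 0 = 0) (hk : StrictMono k)
    (θ : Fin (m + 2) → ℝ) (hθ0 : θ 0 = 0)
    (i : Fin (m + 1)) (φ : ℝ)
    (hW : Wfn m k θ φ ≠ 0) (hWt : Wtfn m k θ φ ≠ 0) :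
    -PsitF m k θ (Fin.last (m + 1)) φ *
        deriv (fun t => PsitF m k θ i.castSucc t / PsitF m k θ (Fin.last (m + 1)) t) φ
      = -PsiF m k θ i φ := by
  set U : ℝ → ℝ := wronsk (fun j : Fin (m + 1) => chiF m k θ (i.castSucc.succAbove j)) with hU
  have hWl : wronsk (fun j : Fin (m + 1) => chiF m k θ ((Fin.last (m + 1)).succAbove j))
      = Wfn m k θ := by
    simp only [Fin.succAbove_last]; rfl
  have dU := hasDerivAt_wronsk (fun j : Fin (m + 1) => chiF m k θ (i.castSucc.succAbove j))
    (fun _ => contDiff_chiF _ _ _ _) φ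
  have dW := hasDerivAt_wronsk (fun j : Fin (m + 1) => chiF m k θ j.castSucc)
    (fun _ => contDiff_chiF _ _ _ _) φ
  have dWt := hasDerivAt_wronsk (chiF m k θ) (fun _ => contDiff_chiF _ _ _ _) φ
  have hne : ∀ᶠ t in nhds φ, Wtfn m k θ t ≠ 0 := dWt.continuousAt.eventually_ne hWt
  have heq : (fun t => PsitF m k θ i.castSucc t / PsitF m k θ (Fin.last (m + 1)) t)
      =ᶠ[nhds φ] fun t => U t / Wfn m k θ t := by
    filter_upwards [hne] with t ht
    simp only [PsitF, hWl]
    rw [div_div_div_cancel_right₀ ht]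
  have hdiv : deriv (fun t => U t / Wfn m k θ t) φ = _ := (dU.div dW hW).deriv
  rw [heq.deriv_eq, hdiv]
  have hD := desnanot_aux (Matrix.of fun a b : Fin (m + 2) =>
    iteratedDeriv (b : ℕ) (chiF m k θ a) φ) i hW
  have hN : PsiF m k θ i φ = wronsk (fun j : Fin m => chiF m k θ (i.succAbove j).castSucc) φ
    / Wfn m k θ φ := rfl
  have hP : PsitF m k θ (Fin.last (m + 1)) φ = Wfn m k θ φ / Wtfn m k θ φ := by
    simp only [PsitF, hWl]
  rw [hP, hN]
  change Wfn m k θ φ * _ - U φ * _ = Wtfn m k θ φ *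
    wronsk (fun j : Fin m => chiF m k θ (i.succAbove j).castSucc) φ at hD
  change _ * ((_ * Wfn m k θ φ - U φ * _) / Wfn m k θ φ ^ 2) = _
  rw [mul_comm (Wfn m k θ φ)] at hD
  have hD' := congrArg (fun x => -(Wfn m k θ φ / Wtfn m k θ φ) * (x / Wfn m k θ φ ^ 2)) hD
  refine hD'.trans ?_
  field_simp
end

section
/- Recurrence between bilinear sums (equation (diff)). Define S_m(φ, ϕ) := ∑_{i=0}^m c_i Ψ_i(φ)Ψ_i(ϕ) cos(k_i(φ − ϕ)) and S_{m+1}(φ, ϕ) := ∑_{i=0}^{m+1} c̃_i Ψ̃_i(φ)Ψ̃_i(ϕ) cos(k_i(φ − ϕ)). Then at all points (φ, ϕ) where W(φ), W(ϕ), W̃(φ), W̃(ϕ) are all nonzero, one has −Ψ̃_{m+1}(φ)·∂/∂φ(S_{m+1}(φ,ϕ)/Ψ̃_{m+1}(φ)) − Ψ̃_{m+1}(ϕ)·∂/∂ϕ(S_{m+1}(φ,ϕ)/Ψ̃_{m+1}(ϕ)) = (∂/∂φ(Ψ̃_{m+1}(φ)·S_m(φ,ϕ)))/Ψ̃_{m+1}(φ)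 + (∂/∂ϕ(Ψ̃_{m+1}(ϕ)·S_m(φ,ϕ)))/Ψ̃_{m+1}(ϕ). -/
/-- `c_i = ∏_{0 ≤ j ≤ m, j ≠ i} (k_i² − k_j²)` for `0 ≤ i ≤ m`. -/
noncomputable def cF (m : ℕ) (k : Fin (m + 2) → ℤ) (i : Fin (m + 1)) : ℝ :=
  ∏ j ∈ Finset.univ.erase i, ((k i.castSucc : ℝ) ^ 2 - (k j.castSucc : ℝ) ^ 2)

/-- `c̃_i = ∏_{0 ≤ j ≤ m+1, j ≠ i} (k_i² − k_j²)` for `0 ≤ i ≤ m+1`. -/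
noncomputable def ctF (m : ℕ) (k : Fin (m + 2) → ℤ) (i : Fin (m + 2)) : ℝ :=
  ∏ j ∈ Finset.univ.erase i, ((k i : ℝ) ^ 2 - (k j : ℝ) ^ 2)

/-- `S_m(φ, ϕ) = ∑_{i=0}^m c_i Ψ_i(φ) Ψ_i(ϕ) cos(k_i(φ − ϕ))`. -/
noncomputable def Sm (m : ℕ) (k : Fin (m + 2) → ℤ) (θ : Fin (m + 2) → ℝ)
    (φ ϕ : ℝ) : ℝ :=
  ∑ i : Fin (m + 1), cF m k i * PsiF m k θ i φ * PsiF m k θ i ϕ *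
    Real.cos ((k i.castSucc : ℝ) * (φ - ϕ))

/-- `S_{m+1}(φ, ϕ) = ∑_{i=0}^{m+1} c̃_i Ψ̃_i(φ) Ψ̃_i(ϕ) cos(k_i(φ − ϕ))`. -/
noncomputable def Smt (m : ℕ) (k : Fin (m + 2) → ℤ) (θ : Fin (m + 2) → ℝ)
    (φ ϕ : ℝ) : ℝ :=
  ∑ i : Fin (m + 2), ctF m k i * PsitF m k θ i φ * PsitF m k θ i ϕ *
    Real.cos ((k i : ℝ) * (φ - ϕ))

/-- Signed cofactor ratios. -/
noncomputable def qF {n : ℕ} (f : Fin (n + 1) → ℝ → ℝ) (i : Fin (n + 1)) (t : ℝ) : ℝ :=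
  (-1) ^ ((i : ℕ) + n) * (wronsk (fun j => f (i.succAbove j)) t / wronsk f t)

lemma qF_sum {n : ℕ} (f : Fin (n + 1) → ℝ → ℝ) (t : ℝ) (h : wronsk f t ≠ 0) (j : ℕ)
    (hj : j ≤ n) :
    ∑ i, qF f i t * iteratedDeriv j (f i) t = if j = n then 1 else 0 := by
  set M : Matrix (Fin (n + 1)) (Fin (n + 1)) ℝ :=
    Matrix.of fun i j => iteratedDeriv (j : ℕ) (f i) t with hM
  have hdet : M.det = wronsk f t := rfl
  have h1 := congrFun (congrFun (Matrix.adjugate_mul M) (Fin.last n)) ⟨j, by omega⟩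
  rw [Matrix.mul_apply] at h1
  have h2 : ∀ i, qF f i t * iteratedDeriv j (f i) t
      = (M.adjugate (Fin.last n) i * M i ⟨j, by omega⟩) / wronsk f t := by
    intro i
    rw [Matrix.adjugate_fin_succ_eq_det_submatrix]
    have h3 : (M.submatrix i.succAbove (Fin.last n).succAbove).det
        = wronsk (fun j => f (i.succAbove j)) t := by
      unfold wronsk
      congr 1
      ext a b
      simp [hM]
    rw [h3]
    simp only [qF, hM, Matrix.of_apply, Fin.val_last]
    ring
  rw [Finset.sum_congr rfl fun i _ => h2 i, ← Finset.sum_div, h1, hdet]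
  by_cases hjn : j = n
  · subst hjn
    have : (⟨j, by omega⟩ : Fin (j + 1)) = Fin.last j := rfl
    simp [this, h]
  · have : Fin.last n ≠ (⟨j, by omega⟩ : Fin (n + 1)) := by
      intro e
      apply hjn
      have := congrArg Fin.val e
      simpa using this.symm
    simp [this, hjn]

lemma wronsk_unique {n : ℕ} (f : Fin n → ℝ → ℝ) (t : ℝ) (h : wronsk f t ≠ 0)
    (r : Fin n → ℝ) (hr : ∀ j < n, ∑ i, r i * iteratedDeriv j (f i) t = 0) : r = 0 := by
  apply Matrix.eq_zero_of_vecMul_eq_zero (M := Matrix.of fun i j : Fin n =>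
    iteratedDeriv (j : ℕ) (f i) t) h
  ext j
  simpa [Matrix.vecMul, dotProduct] using hr j j.2

lemma hasDeriv_iter (g : ℝ → ℝ) (hg : ContDiff ℝ (⊤ : ℕ∞) g) (j : ℕ) (t : ℝ) :
    HasDerivAt (iteratedDeriv j g) (iteratedDeriv (j + 1) g t) t := by
  rw [iteratedDeriv_succ]
  apply DifferentiableAt.hasDerivAt
  apply (hg.differentiable_iteratedDeriv j _).differentiableAt
  exact_mod_cast WithTop.coe_lt_coe.2 (WithTop.coe_lt_top j)

lemma wronsk_diff {n : ℕ} (f : Fin n → ℝ → ℝ) (hf : ∀ i, ContDiff ℝ (⊤ : ℕ∞) (f i)) :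
    Differentiable ℝ (wronsk f) := by
  have h : ∀ (i : Fin n) (j : ℕ), Differentiable ℝ (iteratedDeriv j (f i)) :=
    fun i j t => (hasDeriv_iter (f i) (hf i) j t).differentiableAt
  unfold wronsk
  simp only [Matrix.det_apply, Matrix.of_apply]
  fun_prop

lemma qF_hasDeriv {n : ℕ} (f : Fin (n + 1) → ℝ → ℝ) (hf : ∀ i, ContDiff ℝ (⊤ : ℕ∞) (f i))
    (t : ℝ) (h : wronsk f t ≠ 0) (i : Fin (n + 1)) :
    HasDerivAt (qF f i) (deriv (qF f i) t) t := by
  apply DifferentiableAt.hasDerivAt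
  have h1 := (wronsk_diff f hf) t
  have h2 := (wronsk_diff (fun j => f (i.succAbove j)) fun j => hf _) t
  exact (h2.div h1 h).const_mul _

lemma qF_deriv_sum {n : ℕ} (f : Fin (n + 1) → ℝ → ℝ) (hf : ∀ i, ContDiff ℝ (⊤ : ℕ∞) (f i))
    (t : ℝ) (h : wronsk f t ≠ 0) (j : ℕ) (hj : j ≤ n) :
    ∑ i, deriv (qF f i) t * iteratedDeriv j (f i) t
      = - ∑ i, qF f i t * iteratedDeriv (j + 1) (f i) t := by
  have h1 : HasDerivAt (fun s => ∑ i, qF f i s * iteratedDeriv j (f i) s)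
      (∑ i, (deriv (qF f i) t * iteratedDeriv j (f i) t
        + qF f i t * iteratedDeriv (j + 1) (f i) t)) t :=
    HasDerivAt.fun_sum fun i _ => (qF_hasDeriv f hf t h i).mul (hasDeriv_iter _ (hf i) j t)
  have h2 : (fun s => ∑ i, qF f i s * iteratedDeriv j (f i) s)
      =ᶠ[nhds t] fun _ => if j = n then 1 else 0 := by
    filter_upwards [(wronsk_diff f hf).continuous.continuousAt.eventually_ne h] with s hs
    exact qF_sum f s hs j hj
  have h3 := (h1.congr_of_eventuallyEq h2.symm).unique (hasDerivAt_const t _)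
  rw [Finset.sum_add_distrib] at h3
  linarith

lemma qF_last {n : ℕ} (f : Fin (n + 1) → ℝ → ℝ) (t : ℝ) :
    qF f (Fin.last n) t = wronsk (fun j : Fin n => f j.castSucc) t / wronsk f t := by
  simp [qF, ← two_mul]

/-- First intertwining relation. -/
lemma J1 {m : ℕ} (f : Fin (m + 2) → ℝ → ℝ) (hf : ∀ i, ContDiff ℝ (⊤ : ℕ∞) (f i))
    (t : ℝ) (h : wronsk f t ≠ 0) (h' : wronsk (fun j : Fin (m + 1) => f j.castSucc) t ≠ 0)
    (i : Fin (m + 1)) :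
    qF (fun j : Fin (m + 1) => f j.castSucc) i t =
      - (deriv (qF f i.castSucc) t
        - deriv (qF f (Fin.last _)) t / qF f (Fin.last _) t * qF f i.castSucc t) := by
  set g := fun j : Fin (m + 1) => f j.castSucc with hg
  set l := deriv (qF f (Fin.last _)) t / qF f (Fin.last _) t with hl
  have hu : qF f (Fin.last _) t ≠ 0 := by rw [qF_last]; exact div_ne_zero h' h
  have key := wronsk_unique g t h' (fun i => qF g i t + (deriv (qF f i.castSucc) t
        - l * qF f i.castSucc t)) ?_
  · have := congrFun key i
    simp only [Pi.zero_apply] at this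
    linarith
  intro j hj
  have e1 := qF_sum g t h' j (by omega)
  have e2 := qF_deriv_sum f hf t h j (by omega)
  have e3 := qF_sum f t h j (by omega)
  have e4 := qF_sum f t h (j + 1) (by omega)
  rw [e4] at e2
  rw [if_neg (by omega)] at e3
  rw [Fin.sum_univ_castSucc] at e2 e3
  have e5 : deriv (qF f (Fin.last _)) t = l * qF f (Fin.last _) t := by
    rw [hl]; field_simp
  rw [e5] at e2
  have : ∑ i, (qF g i t + (deriv (qF f i.castSucc) t - l * qF f i.castSucc t))
      * iteratedDeriv j (g i) t = ∑ i, qF g i t * iteratedDeriv j (g i) t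
      + (∑ i : Fin (m + 1), deriv (qF f i.castSucc) t * iteratedDeriv j (f i.castSucc) t
      - l * ∑ i : Fin (m + 1), qF f i.castSucc t * iteratedDeriv j (f i.castSucc) t) := by
    rw [Finset.mul_sum, ← Finset.sum_sub_distrib, ← Finset.sum_add_distrib]
    refine Finset.sum_congr rfl fun i _ => ?_
    simp only [hg]; ring
  rw [this, e1]
  by_cases hjm : j = m
  · simp only [hjm, if_true] at e2 e3 ⊢
    linear_combination e2 - l * e3
  · rw [if_neg (by omega)] at e2
    rw [if_neg hjm]
    linear_combination e2 - l * e3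

/-- Second intertwining relation. -/
lemma J2 {m : ℕ} (hm : 1 ≤ m) (f : Fin (m + 2) → ℝ → ℝ) (hf : ∀ i, ContDiff ℝ (⊤ : ℕ∞) (f i))
    (K : Fin (m + 2) → ℝ)
    (hK : ∀ i j s, iteratedDeriv (j + 2) (f i) s = - K i * iteratedDeriv j (f i) s)
    (t : ℝ) (h : wronsk f t ≠ 0) (h' : wronsk (fun j : Fin (m + 1) => f j.castSucc) t ≠ 0)
    (i : Fin (m + 1)) :
    deriv (qF (fun j : Fin (m + 1) => f j.castSucc) i) t
      + deriv (qF f (Fin.last _)) t / qF f (Fin.last _) t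
        * qF (fun j : Fin (m + 1) => f j.castSucc) i t
      = (K i.castSucc - K (Fin.last _)) * qF f i.castSucc t := by
  have j1 := J1 f hf t h h'
  set g := fun j : Fin (m + 1) => f j.castSucc with hg
  set l := deriv (qF f (Fin.last _)) t / qF f (Fin.last _) t with hl
  have hgd : ∀ i, ContDiff ℝ (⊤ : ℕ∞) (g i) := fun i => hf _
  have hu : qF f (Fin.last _) t ≠ 0 := by rw [qF_last]; exact div_ne_zero h' h
  have e5 : deriv (qF f (Fin.last _)) t = l * qF f (Fin.last _) t := by
    rw [hl]; field_simp
  have key := wronsk_unique g t h' (fun i => deriv (qF g i) t + l * qF g i t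
        - (K i.castSucc - K (Fin.last _)) * qF f i.castSucc t) ?_
  · have := congrFun key i
    simp only [Pi.zero_apply] at this
    linarith
  intro j hj
  have e1 := qF_sum g t h' j (by omega)
  have e2 := qF_deriv_sum g hgd t h' j (by omega)
  have e3 := qF_sum f t h j (by omega)
  rw [if_neg (by omega)] at e3
  -- the sum weighted by `K`
  have e4 : ∑ i, qF f i t * iteratedDeriv (j + 2) (f i) t
      = - ∑ i, K i * qF f i t * iteratedDeriv j (f i) t := by
    rw [← Finset.sum_neg_distrib]
    refine Finset.sum_congr rfl fun i _ => ?_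
    rw [hK]; ring
  have split : ∑ i, (deriv (qF g i) t + l * qF g i t
        - (K i.castSucc - K (Fin.last _)) * qF f i.castSucc t) * iteratedDeriv j (g i) t
      = ∑ i, deriv (qF g i) t * iteratedDeriv j (g i) t
        + l * ∑ i, qF g i t * iteratedDeriv j (g i) t
        - (∑ i : Fin (m + 1), K i.castSucc * qF f i.castSucc t * iteratedDeriv j (f i.castSucc) t
          - K (Fin.last _) *
            ∑ i : Fin (m + 1), qF f i.castSucc t * iteratedDeriv j (f i.castSucc) t) := by
    rw [Finset.mul_sum, Finset.mul_sum, ← Finset.sum_sub_distrib, ← Finset.sum_add_distrib,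
      ← Finset.sum_sub_distrib]
    refine Finset.sum_congr rfl fun i _ => ?_
    simp only [hg]; ring
  rw [split, e1, e2]
  rw [Fin.sum_univ_castSucc] at e3
  have e4' := e4
  rw [Fin.sum_univ_castSucc (fun i => K i * qF f i t * iteratedDeriv j (f i) t)] at e4'
  by_cases hjm : j = m
  · rw [if_pos hjm]
    have a1 : ∑ i, qF g i t * iteratedDeriv (j + 1) (g i) t
        = - (∑ i, deriv (qF f i) t * iteratedDeriv (j + 1) (f i) t
          - l * ∑ i, qF f i t * iteratedDeriv (j + 1) (f i) t) := by
      rw [Fin.sum_univ_castSucc (fun i => deriv (qF f i) t * _),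
        Fin.sum_univ_castSucc (fun i => qF f i t * _), e5]
      have : ∑ i, qF g i t * iteratedDeriv (j + 1) (g i) t
        = - (∑ i : Fin (m + 1), deriv (qF f i.castSucc) t * iteratedDeriv (j + 1) (f i.castSucc) t
          - l * ∑ i : Fin (m + 1), qF f i.castSucc t * iteratedDeriv (j + 1) (f i.castSucc) t) := by
        rw [Finset.mul_sum, ← Finset.sum_sub_distrib, ← Finset.sum_neg_distrib]
        refine Finset.sum_congr rfl fun i _ => ?_
        rw [j1 i]; ring
      rw [this]; ring
    rw [qF_deriv_sum f hf t h (j + 1) (by omega), qF_sum f t h (j + 1) (by omega),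
      if_pos (by omega)] at a1
    rw [a1]
    linear_combination -e4' + K (Fin.last _) * e3
  · rw [if_neg hjm]
    have a1 := qF_sum g t h' (j + 1) (by omega)
    have a2 := qF_sum f t h (j + 2) (by omega)
    rw [a1]
    rw [a2] at e4'
    by_cases hj' : j + 1 = m
    · rw [if_pos (by omega)] at e4' ⊢
      linear_combination -e4' + K (Fin.last _) * e3
    · rw [if_neg (by omega)] at e4' ⊢
      linear_combination -e4' + K (Fin.last _) * e3

lemma chi_contDiff (m : ℕ) (k : Fin (m + 2) → ℤ) (θ : Fin (m + 2) → ℝ) (i : Fin (m + 2)) :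
    ContDiff ℝ (⊤ : ℕ∞) (chiF m k θ i) := by
  unfold chiF
  fun_prop

lemma chi_second (m : ℕ) (k : Fin (m + 2) → ℤ) (θ : Fin (m + 2) → ℝ) (i : Fin (m + 2))
    (j : ℕ) (s : ℝ) :
    iteratedDeriv (j + 2) (chiF m k θ i) s
      = - ((k i : ℝ) ^ 2) * iteratedDeriv j (chiF m k θ i) s := by
  have lin : ∀ s, HasDerivAt (fun φ : ℝ => (k i : ℝ) * φ + θ i) (k i : ℝ) s := fun s => by
    simpa using ((hasDerivAt_id s).const_mul (k i : ℝ)).add_const (θ i)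
  have d1 : deriv (chiF m k θ i) = fun φ => -(k i : ℝ) * Real.sin ((k i : ℝ) * φ + θ i) := by
    ext s
    have := (lin s).cos.deriv
    unfold chiF
    rw [this]; ring
  have d2 : deriv (deriv (chiF m k θ i)) = fun φ => -((k i : ℝ) ^ 2) * chiF m k θ i φ := by
    ext s
    rw [d1]
    have := ((lin s).sin.const_mul (-(k i : ℝ))).deriv
    rw [this]; unfold chiF; ring
  rw [iteratedDeriv_succ', iteratedDeriv_succ', d2]
  exact iteratedDeriv_const_mul_field _ _

lemma sum_deriv_left {n : ℕ} (c κ : Fin n → ℝ) (a : Fin n → ℝ → ℝ) (a' b : Fin n → ℝ)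
    (φ ϕ : ℝ) (ha : ∀ i, HasDerivAt (a i) (a' i) φ) :
    HasDerivAt (fun t => ∑ i, c i * a i t * b i * Real.cos (κ i * (t - ϕ)))
      (∑ i, (c i * a' i * b i * Real.cos (κ i * (φ - ϕ))
        - c i * a i φ * b i * κ i * Real.sin (κ i * (φ - ϕ)))) φ := by
  apply HasDerivAt.fun_sum
  intro i _
  have h1 : HasDerivAt (fun t : ℝ => κ i * (t - ϕ)) (κ i) φ := by
    simpa using ((hasDerivAt_id φ).sub_const ϕ).const_mul (κ i)
  refine ((((ha i).const_mul (c i)).mul_const (b i)).mul h1.cos).congr_deriv ?_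
  ring

lemma sum_deriv_right {n : ℕ} (c κ : Fin n → ℝ) (a : Fin n → ℝ → ℝ) (a' b : Fin n → ℝ)
    (φ ϕ : ℝ) (ha : ∀ i, HasDerivAt (a i) (a' i) ϕ) :
    HasDerivAt (fun t => ∑ i, c i * b i * a i t * Real.cos (κ i * (φ - t)))
      (∑ i, (c i * b i * a' i * Real.cos (κ i * (φ - ϕ))
        + c i * b i * a i ϕ * κ i * Real.sin (κ i * (φ - ϕ)))) ϕ := by
  apply HasDerivAt.fun_sum
  intro i _
  have h1 : HasDerivAt (fun t : ℝ => κ i * (φ - t)) (-κ i) ϕ := by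
    simpa using ((hasDerivAt_id ϕ).const_sub φ).const_mul (κ i)
  refine ((((ha i).const_mul (c i * b i))).mul h1.cos).congr_deriv ?_
  ring

lemma Smt_eq (m : ℕ) (k : Fin (m + 2) → ℤ) (θ : Fin (m + 2) → ℝ) (φ ϕ : ℝ) :
    Smt m k θ φ ϕ = ∑ i, ctF m k i * qF (chiF m k θ) i φ * qF (chiF m k θ) i ϕ *
      Real.cos ((k i : ℝ) * (φ - ϕ)) := by
  unfold Smt
  refine Finset.sum_congr rfl fun i _ => ?_
  have h : ((-1 : ℝ) ^ ((i : ℕ) + (m + 1))) ^ 2 = 1 := by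
    rw [← pow_mul, mul_comm, pow_mul]; simp
  have h2 : ∀ t, qF (chiF m k θ) i t = (-1) ^ ((i : ℕ) + (m + 1)) * PsitF m k θ i t :=
    fun t => rfl
  rw [h2, h2]
  linear_combination (-(ctF m k i * PsitF m k θ i φ * PsitF m k θ i ϕ *
      Real.cos ((k i : ℝ) * (φ - ϕ)))) * h

lemma Sm_eq (m : ℕ) (k : Fin (m + 2) → ℤ) (θ : Fin (m + 2) → ℝ) (φ ϕ : ℝ) :
    Sm m k θ φ ϕ = ∑ i : Fin (m + 1), cF m k i
      * qF (fun j : Fin (m + 1) => chiF m k θ j.castSucc) i φ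
      * qF (fun j : Fin (m + 1) => chiF m k θ j.castSucc) i ϕ *
      Real.cos ((k i.castSucc : ℝ) * (φ - ϕ)) := by
  unfold Sm
  refine Finset.sum_congr rfl fun i _ => ?_
  have h : ((-1 : ℝ) ^ ((i : ℕ) + m)) ^ 2 = 1 := by
    rw [← pow_mul, mul_comm, pow_mul]; simp
  have h2 : ∀ t, qF (fun j : Fin (m + 1) => chiF m k θ j.castSucc) i t
      = (-1) ^ ((i : ℕ) + m) * PsiF m k θ i t :=
    fun t => rfl
  rw [h2, h2]
  linear_combination (-(cF m k i * PsiF m k θ i φ * PsiF m k θ i ϕ *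
      Real.cos ((k i.castSucc : ℝ) * (φ - ϕ)))) * h

lemma ct_castSucc (m : ℕ) (k : Fin (m + 2) → ℤ) (i : Fin (m + 1)) :
    ctF m k i.castSucc
      = cF m k i * ((k i.castSucc : ℝ) ^ 2 - (k (Fin.last _) : ℝ) ^ 2) := by
  unfold ctF cF
  have e : (Finset.univ.erase i.castSucc : Finset (Fin (m + 2)))
      = insert (Fin.last _) ((Finset.univ.erase i).map Fin.castSuccEmb) := by
    ext j
    refine Fin.lastCases ?_ (fun j => ?_) j
    · simp [(Fin.castSucc_lt_last i).ne']
    · simp [(Fin.castSucc_lt_last j).ne]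
  rw [e, Finset.prod_insert, Finset.prod_map, mul_comm]
  · rfl
  · simp [(Fin.castSucc_lt_last _).ne]

lemma psit_last (m : ℕ) (k : Fin (m + 2) → ℤ) (θ : Fin (m + 2) → ℝ) :
    PsitF m k θ (Fin.last (m + 1)) = qF (chiF m k θ) (Fin.last (m + 1)) := by
  ext t
  simp [PsitF, qF, ← two_mul, Wtfn]

/-- **Equation (diff): recurrence between bilinear sums.**
`A_m^*[S_{m+1}(·,ϕ)] + A_m^*[S_{m+1}(φ,·)] = A_m[S_m(·,ϕ)] + A_m[S_m(φ,·)]`, where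
`A_m = Ψ̃_{m+1}^{−1} ∘ (d/dφ) ∘ Ψ̃_{m+1}` and `A_m^* = −Ψ̃_{m+1} ∘ (d/dφ) ∘ Ψ̃_{m+1}^{−1}`. -/
theorem bilinear_sum_recurrence (m : ℕ) (hm : 1 ≤ m)
    (k : Fin (m + 2) → ℤ) (hk0 : k 0 = 0) (hk : StrictMono k)
    (θ : Fin (m + 2) → ℝ) (hθ0 : θ 0 = 0)
    (φ ϕ : ℝ) (hWφ : Wfn m k θ φ ≠ 0) (hWϕ : Wfn m k θ ϕ ≠ 0)
    (hWtφ : Wtfn m k θ φ ≠ 0) (hWtϕ : Wtfn m k θ ϕ ≠ 0) :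
    -PsitF m k θ (Fin.last (m + 1)) φ *
        deriv (fun t => Smt m k θ t ϕ / PsitF m k θ (Fin.last (m + 1)) t) φ -
      PsitF m k θ (Fin.last (m + 1)) ϕ *
        deriv (fun t => Smt m k θ φ t / PsitF m k θ (Fin.last (m + 1)) t) ϕ
    = deriv (fun t => PsitF m k θ (Fin.last (m + 1)) t * Sm m k θ t ϕ) φ /
          PsitF m k θ (Fin.last (m + 1)) φ +
        deriv (fun t => PsitF m k θ (Fin.last (m + 1)) t * Sm m k θ φ t) ϕ /
          PsitF m k θ (Fin.last (m + 1)) ϕ := by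
  rw [psit_last]
  have hf := chi_contDiff m k θ
  simp only [Smt_eq, Sm_eq]
  have j1φ := J1 (chiF m k θ) hf φ hWtφ hWφ
  have j1ϕ := J1 (chiF m k θ) hf ϕ hWtϕ hWϕ
  have j2φ := J2 hm (chiF m k θ) hf (fun i => (k i : ℝ) ^ 2) (chi_second m k θ) φ hWtφ hWφ
  have j2ϕ := J2 hm (chiF m k θ) hf (fun i => (k i : ℝ) ^ 2) (chi_second m k θ) ϕ hWtϕ hWϕ
  have qφ := qF_hasDeriv (chiF m k θ) hf φ hWtφ
  have qϕ := qF_hasDeriv (chiF m k θ) hf ϕ hWtϕ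
  have pφ := qF_hasDeriv (fun j : Fin (m + 1) => chiF m k θ j.castSucc) (fun i => hf _) φ hWφ
  have pϕ := qF_hasDeriv (fun j : Fin (m + 1) => chiF m k θ j.castSucc) (fun i => hf _) ϕ hWϕ
  have huφ : qF (chiF m k θ) (Fin.last _) φ ≠ 0 := by
    rw [qF_last]; exact div_ne_zero hWφ hWtφ
  have huϕ : qF (chiF m k θ) (Fin.last _) ϕ ≠ 0 := by
    rw [qF_last]; exact div_ne_zero hWϕ hWtϕ
  generalize hp : qF (fun j : Fin (m + 1) => chiF m k θ j.castSucc) = p at *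
  generalize hq : qF (chiF m k θ) = q at *
  have D1 := sum_deriv_left (ctF m k) (fun i => (k i : ℝ)) q _ (fun i => q i ϕ) φ ϕ qφ
  have D2 := sum_deriv_right (ctF m k) (fun i => (k i : ℝ)) q _ (fun i => q i φ) φ ϕ qϕ
  have E1 := sum_deriv_left (cF m k) (fun i => (k i.castSucc : ℝ)) p _ (fun i => p i ϕ) φ ϕ pφ
  have E2 := sum_deriv_right (cF m k) (fun i => (k i.castSucc : ℝ)) p _ (fun i => p i φ) φ ϕ pϕ
  rw [(D1.fun_div (qφ _) huφ).deriv, (D2.fun_div (qϕ _) huϕ).deriv, ((qφ _).fun_mul E1).deriv,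
    ((qϕ _).fun_mul E2).deriv]
  set l1 := deriv (q (Fin.last _)) φ / q (Fin.last _) φ with hl1
  set l2 := deriv (q (Fin.last _)) ϕ / q (Fin.last _) ϕ with hl2
  have a1 : deriv (q (Fin.last _)) φ = l1 * q (Fin.last _) φ := by rw [hl1]; field_simp
  have a2 : deriv (q (Fin.last _)) ϕ = l2 * q (Fin.last _) ϕ := by rw [hl2]; field_simp
  have g1 : ∀ D S u l : ℝ, u ≠ 0 → u * ((D * u - S * (l * u)) / u ^ 2) = D - l * S := by
    intro D S u l hu; field_simp
  have g2 : ∀ E T u l : ℝ, u ≠ 0 → (l * u * T + u * E) / u = E + l * T := by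
    intro E T u l hu; field_simp; ring
  rw [a1, a2, neg_mul, g1 _ _ _ _ huφ, g1 _ _ _ _ huϕ, g2 _ _ _ _ huφ, g2 _ _ _ _ huϕ]
  have L : ∀ A B S T l l' : ℝ, -(A - l * S) - (B - l' * S) = -(A + B - (l + l') * S) := by
    intros; ring
  have R : ∀ A B T l l' : ℝ, A + l * T + (B + l' * T) = A + B + (l + l') * T := by
    intros; ring
  rw [L _ _ _ 0, R, Finset.mul_sum, Finset.mul_sum, ← Finset.sum_add_distrib,
    ← Finset.sum_add_distrib, ← Finset.sum_add_distrib, ← Finset.sum_sub_distrib,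
    ← Finset.sum_neg_distrib, Fin.sum_univ_castSucc, a1, a2]
  rw [add_eq_left.2 (by ring)]
  refine Finset.sum_congr rfl fun i _ => ?_
  have b1 := j1φ i
  have b2 := j1ϕ i
  have b3 := j2φ i
  have b4 := j2ϕ i
  rw [ct_castSucc]
  have b3' : deriv (p i) φ = ((k i.castSucc : ℝ) ^ 2 - (k (Fin.last _) : ℝ) ^ 2)
    * q i.castSucc φ - l1 * p i φ := by linarith
  have b4' : deriv (p i) ϕ = ((k i.castSucc : ℝ) ^ 2 - (k (Fin.last _) : ℝ) ^ 2)
    * q i.castSucc ϕ - l2 * p i ϕ := by linarith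
  have b1' : deriv (q i.castSucc) φ = l1 * q i.castSucc φ - p i φ := by linarith
  have b2' : deriv (q i.castSucc) ϕ = l2 * q i.castSucc ϕ - p i ϕ := by linarith
  rw [b1', b2', b3', b4']
  ring
end
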